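/- Let θ be a real number with 0 < θ ≤ π/2 and set q = ⌊π/(2θ)⌋. Then (1 − cos θ)·(sin²((q+1)θ) + sin²(qθ))/sin²θ ≥ (1 + cos²θ)/(1 + cos θ). -/

import Mathlib

/-!
Since `(1 - cos θ) / sin² θ = 1 / (1 + cos θ)`, the claim is
`sin² ((q+1)θ) + sin² (qθ) ≥ 1 + cos² θ`. The left side equals `1 - cos ((2q+1)θ) cos θ`, and
`qθ ≤ π/2 < (q+1)θ` puts `(2q+1)θ` within `θ` of `π`, so `cos ((2q+1)θ) ≤ -cos θ`.
-/

open Real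

lemma sin_sq_add_sin_sq_eq (a b : ℝ) :
    sin a ^ 2 + sin b ^ 2 = 1 - cos (a + b) * cos (a - b) := by
  rw [cos_add, cos_sub]
  linear_combination (1 - sin b ^ 2) * sin_sq_add_cos_sq a + cos a ^ 2 * sin_sq_add_cos_sq b

/-- Eqn 60b of the paper: the success probability after `q = ⌊π/(2θ)⌋` iterations is
at least `(1 + cos²θ)/(1 + cos θ)`. -/
theorem stmt_9 (θ : ℝ) (hθ0 : 0 < θ) (hθ : θ ≤ π / 2) :
    (1 + cos θ ^ 2) / (1 + cos θ) ≤
      (1 - cos θ) * (sin (((⌊π / (2 * θ)⌋ : ℝ) + 1) * θ) ^ 2 + sin ((⌊π / (2 * θ)⌋ : ℝ) * θ) ^ 2)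
        / sin θ ^ 2 := by
  have h1 : (⌊π / (2 * θ)⌋ : ℝ) * (2 * θ) ≤ π :=
    (le_div_iff₀ (by positivity)).1 (Int.floor_le _)
  have h2 : π < ((⌊π / (2 * θ)⌋ : ℝ) + 1) * (2 * θ) :=
    (div_lt_iff₀ (by positivity)).1 (Int.lt_floor_add_one _)
  generalize (⌊π / (2 * θ)⌋ : ℝ) = q at *
  have hc : 0 ≤ cos θ := cos_nonneg_of_mem_Icc ⟨by linarith, hθ⟩
  have hs : 0 < sin θ := sin_pos_of_pos_of_lt_pi hθ0 (by linarith [pi_pos])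
  have hcos : cos θ ≤ -cos ((q + 1) * θ + q * θ) := by
    rw [← cos_sub_pi, ← cos_abs (_ - π)]
    exact cos_le_cos_of_nonneg_of_le_pi (abs_nonneg _) (by linarith [pi_pos])
      (abs_le.2 ⟨by linarith, by linarith⟩)
  have key : 1 + cos θ ^ 2 ≤ sin ((q + 1) * θ) ^ 2 + sin (q * θ) ^ 2 := by
    rw [sin_sq_add_sin_sq_eq, show (q + 1) * θ - q * θ = θ by ring]
    nlinarith
  rw [div_le_div_iff₀ (by positivity) (by positivity)]
  have h3 : sin θ ^ 2 = (1 - cos θ) * (1 + cos θ) := by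
    linear_combination sin_sq_add_cos_sq θ
  have h4 : 0 ≤ sin θ ^ 2 := sq_nonneg _
  calc (1 + cos θ ^ 2) * sin θ ^ 2
      ≤ (sin ((q + 1) * θ) ^ 2 + sin (q * θ) ^ 2) * sin θ ^ 2 :=
        mul_le_mul_of_nonneg_right key h4
    _ = _ := by rw [h3]; ring
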